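/- Let η be a torsion-type tensor on (V,J) satisfying the almost Kähler condition. If η_{T_x y} z = 0 for all x,y,z ∈ V, then T = 0 and η = 0. -/

import Mathlib

open scoped InnerProductSpace

/-- If a torsion-type tensor η on (V,J) satisfies the almost Kähler
condition and `η (T x y) z = 0` for all `x y z`, then `T = 0` and `η = 0`. -/
theorem torsion_and_eta_vanish_of_eta_torsion_eq_zero
    {V : Type*} [NormedAddCommGroup V] [InnerProductSpace ℝ V] [FiniteDimensional ℝ V]
    (J : V →ₗ[ℝ] V)
    (hJiso : ∀ x y : V, ⟪J x, J y⟫_ℝ = ⟪x, y⟫_ℝ)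
    (hJJ : ∀ x : V, J (J x) = -x)
    (η : V →ₗ[ℝ] V →ₗ[ℝ] V)
    (hskew : ∀ x y z : V, ⟪η x y, z⟫_ℝ = -⟪y, η x z⟫_ℝ)
    (hanti : ∀ x y : V, η x (J y) = -J (η x y))
    (T : V → V → V) (hT : ∀ x y : V, T x y = η x y - η y x)
    (hAK : ∀ x y z : V, ⟪T x y, z⟫_ℝ = -⟪η z x, y⟫_ℝ)
    (hvanish : ∀ x y z : V, η (T x y) z = 0) :
    (∀ x y : V, T x y = 0) ∧ (∀ x y : V, η x y = 0) := by
  have hT0 : ∀ x y : V, T x y = 0 := by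
    intro x y
    -- The almost Kähler condition at `z = T x y` gives `‖T x y‖² = 0`.
    have h := hAK x y (T x y)
    rw [hvanish, inner_zero_left, neg_zero] at h
    exact inner_self_eq_zero.mp h
  refine ⟨hT0, fun z x => ?_⟩
  -- With `T = 0`, the same condition says that `η z x` is orthogonal to every vector.
  have h := hAK x (η z x) z
  rw [hT0, inner_zero_left] at h
  exact inner_self_eq_zero.mp (neg_eq_zero.mp h.symm)
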